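/- Let H be a bipartite simple graph with finitely many edges such that every support vertex of H has degree at least 3, and let t be a natural number. If a graph H' can be obtained from H by a sequence of exactly t operations, each of which is one of (I), (II), (III), (I'), (II'), (III'), then H' can be obtained from H by a sequence of at most t operations, each of which is one of (I), (II), (III). -/

import Mathlib

open SimpleGraph

/-- Operation (I): add a pendant edge joining a support vertex `v` of `H`
to an isolated vertex `w` of `H`. -/
def OpI (H H' : SimpleGraph ℕ) : Prop :=
  ∃ v w : ℕ, v ∈ H.support ∧ w ∉ H.support ∧ H' = H ⊔ edge v w

/-- Operation (II): subdivide an edge `uv` of `H` using two distinct isolated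
vertices `p, q` of `H`, i.e. delete `uv` and add the edges `up`, `pq`, `qv`. -/
def OpII (H H' : SimpleGraph ℕ) : Prop :=
  ∃ u v p q : ℕ, H.Adj u v ∧ p ∉ H.support ∧ q ∉ H.support ∧ p ≠ q ∧
    H' = H.deleteEdges {s(u, v)} ⊔ edge u p ⊔ edge p q ⊔ edge q v

/-- Operation (III): for vertices `x, y` of `H` that are non-adjacent and have a
common neighbor `z`, add a new isolated vertex `w` of `H` together with the
edges `xw` and `wy`. -/
def OpIII (H H' : SimpleGraph ℕ) : Prop :=
  ∃ x y z w : ℕ, x ≠ y ∧ ¬ H.Adj x y ∧ H.Adj x z ∧ H.Adj y z ∧ w ∉ H.support ∧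
    H' = H ⊔ edge x w ⊔ edge w y

/-- One of the forward operations (I), (II), (III). -/
def OpFwd (H H' : SimpleGraph ℕ) : Prop := OpI H H' ∨ OpII H H' ∨ OpIII H H'

/-- One of the six operations (I), (II), (III), (I'), (II'), (III'):
the inverse operations are those whose inverse is a forward operation. -/
def OpAny (H H' : SimpleGraph ℕ) : Prop := OpFwd H H' ∨ OpFwd H' H

/-- `SeqN R n H H'` : `H'` is obtained from `H` by a sequence of exactly `n`
steps of the relation `R`. -/
inductive SeqN (R : SimpleGraph ℕ → SimpleGraph ℕ → Prop) :
    ℕ → SimpleGraph ℕ → SimpleGraph ℕ → Prop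
  | refl (H : SimpleGraph ℕ) : SeqN R 0 H H
  | tail {n : ℕ} {H G G' : SimpleGraph ℕ} :
      SeqN R n H G → R G G' → SeqN R (n + 1) H G'

/-!
The inverse operations (I') and (III') are the same move: delete a vertex `w` of degree one or two
whose neighbourhood lies in that of another vertex `z`, i.e. fold `w` onto `z`; (II') suppresses a
path `u p q v` to an edge. These moves satisfy a diamond property: two of them applied to the same
graph lead to graphs that agree after at most one further move on each side, up to a permutation of
vertices of degree at most two. Neither move raises a degree, so in a graph obtained from `H` by
undoing moves such a permutation fixes every support vertex of `H`, and renaming the whole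
sequence leaves its start `H` unchanged. Hence an inverse operation at the end of such a sequence
can be pushed towards `H`, where it has to disappear because no move applies to `H` itself.

Both moves are realized by homomorphisms from the large graph to the small one, so triangle-freeness
of `H` persists. It is what makes the two neighbours of a folded vertex non-adjacent, as operation
(III) demands.
-/

section

variable {V : Type*} {G G' : SimpleGraph V} {u p q v u' p' q' v' w z w' z' x : V}

theorem cliqueFree_of_hom {W : Type*} {K : SimpleGraph W} {n : ℕ} (f : G →g K)
    (hK : K.CliqueFree n) : G.CliqueFree n :=
  cliqueFree_iff.2 ⟨fun c => (cliqueFree_iff.1 hK).false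
    ⟨f.comp c.toHom, Hom.injective_of_top_hom _⟩⟩

theorem not_adj_of_cliqueFree_three {a b c : V} (hG : G.CliqueFree 3) (hab : G.Adj a b)
    (hac : G.Adj a c) : ¬ G.Adj b c := by
  classical exact fun hbc => hG _ (is3Clique_triple_iff.2 ⟨hab, hac, hbc⟩)

theorem encard_le_two_of_subset_pair {s : Set V} {a b : V} (h : s ⊆ {a, b}) : s.encard ≤ 2 :=
  (Set.encard_le_encard h).trans (by simpa [one_add_one_eq_two] using Set.encard_insert_le {b} a)

theorem exists_eq_pair_of_encard_le_two {s : Set V} (hne : s.Nonempty) (hs : s.encard ≤ 2) :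
    ∃ a b, s = {a, b} := by
  obtain ⟨a, ha⟩ := hne
  have hdiff : (s \ {a}).encard ≤ 1 := by
    rw [← Set.encard_sdiff_singleton_add_one ha] at hs
    exact (ENat.add_le_add_iff_right (by simp)).1 hs
  rcases Set.encard_le_one_iff_eq.1 hdiff with hempty | ⟨b, hb⟩
  · exact ⟨a, a, by simpa using (Set.sdiff_eq_empty.1 hempty).antisymm (by simpa using ha)⟩
  · exact ⟨a, b, by rw [← hb, Set.insert_sdiff_singleton, Set.insert_eq_of_mem ha]⟩

theorem encard_neighborSet_comap (σ : Equiv.Perm V) :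
    ((G.comap σ).neighborSet x).encard = (G.neighborSet (σ x)).encard :=
  Set.encard_preimage_of_bijective σ.bijective (G.neighborSet (σ x))

/-! ### Folds and suppressions -/

/-- `w` is a non-isolated vertex of degree at most two whose neighbours are all neighbours of the
other vertex `z`. Deleting such a `w` is (I') if it has degree one and, in a triangle-free graph,
(III') if it has degree two. -/
structure IsFoldable (G : SimpleGraph V) (w z : V) : Prop where
  ne : z ≠ w
  mem_support : w ∈ G.support
  encard_le_two : (G.neighborSet w).encard ≤ 2
  adj_of_adj : ∀ y, G.Adj w y → G.Adj z y

/-- `u p q v` is a path between distinct non-adjacent vertices `u` and `v` whose inner vertices `p`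
and `q` have degree two; these are the paths to which (II') applies. -/
structure IsSuppressible (G : SimpleGraph V) (u p q v : V) : Prop where
  adj_left_iff : ∀ y, G.Adj p y ↔ y = u ∨ y = q
  adj_right_iff : ∀ y, G.Adj q y ↔ y = p ∨ y = v
  left_ne : u ≠ q
  right_ne : v ≠ p
  ends_ne : u ≠ v
  not_adj_ends : ¬ G.Adj u v

/-- The outcome of (II') on the path `u p q v`: isolate `p` and `q`, and join `u` to `v`. -/
def suppress (G : SimpleGraph V) (u p q v : V) : SimpleGraph V :=
  (G.deleteIncidenceSet p).deleteIncidenceSet q ⊔ edge u v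

theorem suppress_adj {y : V} : (suppress G u p q v).Adj x y ↔
    (G.Adj x y ∧ x ≠ p ∧ x ≠ q ∧ y ≠ p ∧ y ≠ q) ∨ (x = u ∧ y = v ∨ x = v ∧ y = u) ∧ x ≠ y := by
  simp only [suppress, sup_adj, deleteIncidenceSet_adj, edge_adj]
  tauto

theorem suppress_reverse : suppress G v q p u = suppress G u p q v := by
  ext x y
  simp only [suppress_adj]
  tauto

theorem deleteIncidenceSet_suppress (hw : w ∉ ({u, p, q, v} : Set V)) :
    (suppress G u p q v).deleteIncidenceSet w = suppress (G.deleteIncidenceSet w) u p q v := by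
  ext x y
  simp only [Set.mem_insert_iff, Set.mem_singleton_iff] at hw
  simp only [suppress_adj, deleteIncidenceSet_adj]
  grind

theorem deleteIncidenceSet_comm (G : SimpleGraph V) (w w' : V) :
    (G.deleteIncidenceSet w).deleteIncidenceSet w' =
      (G.deleteIncidenceSet w').deleteIncidenceSet w := by
  ext x y
  simp only [deleteIncidenceSet_adj]
  tauto

theorem notMem_support_deleteIncidenceSet (G : SimpleGraph V) (w : V) :
    w ∉ (G.deleteIncidenceSet w).support :=
  fun ⟨_, hy⟩ => (deleteIncidenceSet_adj.1 hy).2.1 rfl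

namespace IsFoldable

theorem trans (h' : IsFoldable G w' w) (h : IsFoldable G w z) (hne : z ≠ w') :
    IsFoldable G w' z :=
  ⟨hne, h'.mem_support, h'.encard_le_two, fun y hy => h.adj_of_adj y (h'.adj_of_adj y hy)⟩

theorem nonempty_hom_deleteIncidenceSet (h : IsFoldable G w z) :
    Nonempty (G →g G.deleteIncidenceSet w) := by
  classical
  refine ⟨⟨Function.update id w z, fun {x y} hxy => ?_⟩⟩
  have := h.ne
  have := h.adj_of_adj x
  have := h.adj_of_adj y
  have := hxy.ne
  have := hxy.symm
  have := G.adj_comm z x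
  simp only [deleteIncidenceSet_adj, Function.update_apply, id]
  grind

theorem comap {σ : Equiv.Perm V} (h : IsFoldable G (σ w) (σ z)) :
    IsFoldable (G.comap σ) w z where
  ne := ne_of_apply_ne σ h.ne
  mem_support := by
    obtain ⟨y, hy⟩ := h.mem_support
    exact ⟨σ.symm y, by simpa using hy⟩
  encard_le_two := (encard_neighborSet_comap σ).trans_le h.encard_le_two
  adj_of_adj y hy := h.adj_of_adj (σ y) hy

theorem deleteIncidenceSet (h : IsFoldable G w z) (h' : IsFoldable G w' z') (hw : w ≠ w')
    (hz' : z' ≠ w) : IsFoldable (G.deleteIncidenceSet w) w' z' where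
  ne := h'.ne
  mem_support := by
    obtain ⟨y, hy⟩ := h'.mem_support
    by_cases hyw : y = w
    · subst hyw
      have hz : G.Adj z w' := h.adj_of_adj w' hy.symm
      exact ⟨z, deleteIncidenceSet_adj.2 ⟨hz.symm, hw.symm, h.ne⟩⟩
    · exact ⟨y, deleteIncidenceSet_adj.2 ⟨hy, hw.symm, hyw⟩⟩
  encard_le_two := (Set.encard_le_encard fun _ hy => (deleteIncidenceSet_adj.1 hy).1).trans
    h'.encard_le_two
  adj_of_adj y hy := by
    rw [deleteIncidenceSet_adj] at hy ⊢
    exact ⟨h'.adj_of_adj y hy.1, hz', hy.2.2⟩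

end IsFoldable

/-- The retraction of the path `u p q v` onto the edge `uv`, sending `p` to `v` and `q` to `u`. -/
def contractPath [DecidableEq V] (u p q v : V) : V → V :=
  Function.update (Function.update id q u) p v

theorem contractPath_apply [DecidableEq V] (u p q v x : V) :
    contractPath u p q v x = if x = p then v else if x = q then u else x := by
  simp only [contractPath, Function.update_apply, id]

namespace IsSuppressible

theorem adj_left (h : IsSuppressible G u p q v) : G.Adj p u := (h.adj_left_iff u).2 (.inl rfl)

theorem adj_mid (h : IsSuppressible G u p q v) : G.Adj p q := (h.adj_left_iff q).2 (.inr rfl)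

theorem adj_right (h : IsSuppressible G u p q v) : G.Adj q v := (h.adj_right_iff v).2 (.inr rfl)

theorem reverse (h : IsSuppressible G u p q v) : IsSuppressible G v q p u where
  adj_left_iff y := (h.adj_right_iff y).trans or_comm
  adj_right_iff y := (h.adj_left_iff y).trans or_comm
  left_ne := h.right_ne
  right_ne := h.left_ne
  ends_ne := h.ends_ne.symm
  not_adj_ends huv := h.not_adj_ends huv.symm

theorem comap {σ : Equiv.Perm V} (h : IsSuppressible G (σ u) (σ p) (σ q) (σ v)) :
    IsSuppressible (G.comap σ) u p q v where
  adj_left_iff y := by simpa using h.adj_left_iff (σ y)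
  adj_right_iff y := by simpa using h.adj_right_iff (σ y)
  left_ne := ne_of_apply_ne σ h.left_ne
  right_ne := ne_of_apply_ne σ h.right_ne
  ends_ne := ne_of_apply_ne σ h.ends_ne
  not_adj_ends := h.not_adj_ends

theorem adj_contractPath [DecidableEq V] {y : V} (h : IsSuppressible G u p q v)
    (hxy : G.Adj x y) :
    (suppress G u p q v).Adj (contractPath u p q v x) (contractPath u p q v y) := by
  have := h.ends_ne
  have := hxy.ne
  have := G.adj_comm x y
  have := h.adj_left_iff x
  have := h.adj_left_iff y
  have := h.adj_right_iff x
  have := h.adj_right_iff y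
  simp only [suppress_adj, contractPath_apply]
  grind

theorem left_notMem_support_suppress (h : IsSuppressible G u p q v) :
    p ∉ (suppress G u p q v).support := by
  rintro ⟨y, hy⟩
  have := h.adj_left.ne
  have := h.right_ne
  have := suppress_adj.1 hy
  grind

theorem right_notMem_support_suppress (h : IsSuppressible G u p q v) :
    q ∉ (suppress G u p q v).support :=
  suppress_reverse (G := G) ▸ h.reverse.left_notMem_support_suppress

theorem nonempty_hom_suppress (h : IsSuppressible G u p q v) :
    Nonempty (G →g suppress G u p q v) := by
  classical exact ⟨⟨contractPath u p q v, h.adj_contractPath⟩⟩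

theorem encard_neighborSet_suppress_le (h : IsSuppressible G u p q v) (x : V) :
    ((suppress G u p q v).neighborSet x).encard ≤ (G.neighborSet x).encard := by
  classical
  refine (Set.encard_le_encard (t := contractPath u p q v '' G.neighborSet x) fun y hy => ?_).trans
    (Set.encard_image_le _ _)
  rw [mem_neighborSet, suppress_adj] at hy
  rcases hy with ⟨hxy, _, _, hyp, hyq⟩ | ⟨⟨rfl, rfl⟩ | ⟨rfl, rfl⟩, _⟩
  · exact ⟨y, hxy, by rw [contractPath_apply, if_neg hyp, if_neg hyq]⟩
  · exact ⟨p, h.adj_left.symm, by rw [contractPath_apply, if_pos rfl]⟩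
  · exact ⟨q, h.adj_right.symm, by rw [contractPath_apply, if_neg h.adj_mid.ne', if_pos rfl]⟩

end IsSuppressible

/-- `Expansion G' G`: the graph `G'` arises from `G` by deleting a foldable vertex or by
suppressing a path. For triangle-free graphs this is a forward operation from `G'` to `G`,
described in terms of `G`. -/
inductive Expansion (G' G : SimpleGraph V) : Prop
  | unfold {w z : V} (h : IsFoldable G w z) (hG' : G' = G.deleteIncidenceSet w)
  | subdivide {u p q v : V} (h : IsSuppressible G u p q v) (hG' : G' = suppress G u p q v)

namespace Expansion

theorem nonempty_hom (h : Expansion G' G) : Nonempty (G →g G') := by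
  rcases h with ⟨h, rfl⟩ | ⟨h, rfl⟩
  · exact h.nonempty_hom_deleteIncidenceSet
  · exact h.nonempty_hom_suppress

theorem cliqueFree {n : ℕ} (h : Expansion G' G) (hG' : G'.CliqueFree n) : G.CliqueFree n :=
  h.nonempty_hom.elim fun f => cliqueFree_of_hom f hG'

theorem encard_neighborSet_le (h : Expansion G' G) (x : V) :
    (G'.neighborSet x).encard ≤ (G.neighborSet x).encard := by
  rcases h with ⟨_, rfl⟩ | ⟨h, rfl⟩
  · exact Set.encard_le_encard fun _ hy => (deleteIncidenceSet_adj.1 hy).1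
  · exact h.encard_neighborSet_suppress_le x

theorem comap (h : Expansion G' G) (σ : Equiv.Perm V) :
    Expansion (G'.comap σ) (G.comap σ) := by
  rcases h with @⟨w, z, h, rfl⟩ | @⟨u, p, q, v, h, rfl⟩
  · obtain ⟨w, rfl⟩ := σ.surjective w
    obtain ⟨z, rfl⟩ := σ.surjective z
    refine .unfold h.comap ?_
    ext x y
    simp only [comap_adj, deleteIncidenceSet_adj, ne_eq, σ.apply_eq_iff_eq]
  · obtain ⟨u, rfl⟩ := σ.surjective u
    obtain ⟨p, rfl⟩ := σ.surjective p
    obtain ⟨q, rfl⟩ := σ.surjective q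
    obtain ⟨v, rfl⟩ := σ.surjective v
    refine .subdivide h.comap ?_
    ext x y
    simp only [comap_adj, suppress_adj, ne_eq, σ.apply_eq_iff_eq]

theorem exists_encard_neighborSet_le_two (h : Expansion G' G) :
    ∃ x ∈ G.support, (G.neighborSet x).encard ≤ 2 := by
  rcases h with @⟨w, _, h, _⟩ | @⟨_, p, _, _, h, _⟩
  · exact ⟨w, h.mem_support, h.encard_le_two⟩
  · exact ⟨p, ⟨_, h.adj_left⟩, encard_le_two_of_subset_pair fun y hy => (h.adj_left_iff y).1 hy⟩

end Expansion

/-! ### Renaming vertices of low degree -/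

theorem comap_eq_self_of_fixes_support {σ : Equiv.Perm V}
    (hσ : ∀ x ∈ G.support, σ x = x) : G.comap σ = G := by
  ext x y
  rw [comap_adj]
  constructor
  · intro hxy
    have hx : σ x = x := σ.injective (hσ _ ⟨_, hxy⟩)
    have hy : σ y = y := σ.injective (hσ _ ⟨_, hxy.symm⟩)
    rwa [hx, hy] at hxy
  · intro hxy
    rwa [hσ x ⟨y, hxy⟩, hσ y ⟨x, hxy.symm⟩]

/-- `K` arises from `G` by a permutation of the vertices that moves only vertices of degree at
most two in `G`. -/
def LowDegreeRenaming (G K : SimpleGraph V) : Prop :=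
  ∃ σ : Equiv.Perm V, (∀ x, σ x ≠ x → (G.neighborSet x).encard ≤ 2) ∧ K = G.comap σ

namespace LowDegreeRenaming

variable {K L : SimpleGraph V}

theorem refl (G : SimpleGraph V) : LowDegreeRenaming G G :=
  ⟨1, fun _ h => absurd rfl h, rfl⟩

theorem symm (h : LowDegreeRenaming G K) : LowDegreeRenaming K G := by
  obtain ⟨σ, hσ, rfl⟩ := h
  refine ⟨σ⁻¹, fun x hx => ?_, ?_⟩
  · have hmoved : σ x ≠ x := fun hfix => hx (σ.symm_apply_eq.2 hfix.symm)
    rw [encard_neighborSet_comap]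
    exact hσ _ (σ.injective.ne hmoved)
  · ext x y
    simp

theorem trans (h : LowDegreeRenaming G K) (h' : LowDegreeRenaming K L) :
    LowDegreeRenaming G L := by
  obtain ⟨σ, hσ, rfl⟩ := h
  obtain ⟨τ, hτ, rfl⟩ := h'
  refine ⟨σ * τ, fun x hx => ?_, rfl⟩
  by_cases hσx : σ x = x
  · have hτx : τ x ≠ x := fun hτx => hx (by rw [Equiv.Perm.mul_apply, hτx, hσx])
    simpa only [encard_neighborSet_comap, hσx] using hτ x hτx
  · exact hσ x hσx

theorem of_rename {a b : V} (hb : b ∉ G.support) (ha : a ∉ K.support)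
    (hdeg : (G.neighborSet a).encard ≤ 2) (hab : ∀ y, K.Adj b y ↔ G.Adj a y)
    (hoff : ∀ x y, x ≠ a → x ≠ b → y ≠ a → y ≠ b → (K.Adj x y ↔ G.Adj x y)) :
    LowDegreeRenaming G K := by
  classical
  have hGb (y : V) : ¬ G.Adj b y := fun h => hb ⟨y, h⟩
  have hKa (y : V) : ¬ K.Adj a y := fun h => ha ⟨y, h⟩
  refine ⟨Equiv.swap a b, fun x hx => ?_, ?_⟩
  · rcases (Equiv.swap_apply_ne_self_iff.1 hx).2 with rfl | rfl
    · exact hdeg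
    · exact encard_le_two_of_subset_pair (a := x) (b := x) fun y hy => (hGb y hy).elim
  · ext x y
    have hG := G.adj_comm
    have hK := K.adj_comm
    rw [comap_adj, Equiv.swap_apply_def, Equiv.swap_apply_def]
    grind [G.irrefl, K.irrefl]

end LowDegreeRenaming

/-- The common outcome of the diamond property: `G₁` and `G₂` agree, up to renaming vertices of
low degree, after undoing at most one expansion on each side. -/
def Joinable (G₁ G₂ : SimpleGraph V) : Prop :=
  ∃ K₁ K₂, Relation.ReflGen Expansion K₁ G₁ ∧ LowDegreeRenaming K₁ K₂ ∧
    Relation.ReflGen Expansion K₂ G₂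

theorem Joinable.symm {G₁ G₂ : SimpleGraph V} (h : Joinable G₁ G₂) : Joinable G₂ G₁ :=
  let ⟨K₁, K₂, h₁, hK, h₂⟩ := h
  ⟨K₂, K₁, h₂, hK.symm, h₁⟩

theorem LowDegreeRenaming.joinable {G₁ G₂ : SimpleGraph V} (h : LowDegreeRenaming G₁ G₂) :
    Joinable G₁ G₂ :=
  ⟨G₁, G₂, .refl, h, .refl⟩

theorem Expansion.joinable {K G₁ G₂ : SimpleGraph V} (h₁ : Expansion K G₁) (h₂ : Expansion K G₂) :
    Joinable G₁ G₂ :=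
  ⟨K, K, .single h₁, .refl K, .single h₂⟩

/-! ### The diamond property -/

theorem IsFoldable.joinable_of_ne (h : IsFoldable G w z) (h' : IsFoldable G w' z') (hw : w ≠ w')
    (hz : z ≠ w') (hz' : z' ≠ w) :
    Joinable (G.deleteIncidenceSet w) (G.deleteIncidenceSet w') :=
  Expansion.joinable (.unfold (h.deleteIncidenceSet h' hw hz') rfl)
    (.unfold (h'.deleteIncidenceSet h hw.symm hz) (deleteIncidenceSet_comm G w w'))

theorem IsFoldable.lowDegreeRenaming_of_twins (h : IsFoldable G w w') (h' : IsFoldable G w' w) :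
    LowDegreeRenaming (G.deleteIncidenceSet w) (G.deleteIncidenceSet w') := by
  have htwins (y : V) : G.Adj w y ↔ G.Adj w' y := ⟨h.adj_of_adj y, h'.adj_of_adj y⟩
  refine .of_rename (a := w') (b := w) (notMem_support_deleteIncidenceSet G w)
    (notMem_support_deleteIncidenceSet G w') ?_ ?_ ?_
  · exact (Set.encard_le_encard fun y hy => (deleteIncidenceSet_adj.1 hy).1).trans h'.encard_le_two
  · intro y
    simp only [deleteIncidenceSet_adj]
    grind [G.irrefl]
  · intro x y _ _ _ _
    simp only [deleteIncidenceSet_adj]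
    tauto

theorem IsFoldable.joinable (h : IsFoldable G w z) (h' : IsFoldable G w' z') :
    Joinable (G.deleteIncidenceSet w) (G.deleteIncidenceSet w') := by
  by_cases hw : w = w'
  · subst hw
    exact (LowDegreeRenaming.refl _).joinable
  by_cases hz : z = w' <;> by_cases hz' : z' = w
  · subst hz hz'
    exact (h.lowDegreeRenaming_of_twins h').joinable
  · subst hz
    exact (h.trans h' hz').joinable_of_ne h' hw h'.ne hz'
  · subst hz'
    exact h.joinable_of_ne (h'.trans h hz) hw hz h.ne
  · exact h.joinable_of_ne h' hw hz hz'

namespace IsSuppressible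

theorem not_isFoldable_left (h : IsSuppressible G u p q v) : ¬ IsFoldable G p z := by
  intro hp
  have hzv : z = v :=
    ((h.adj_right_iff z).1 (hp.adj_of_adj q h.adj_mid).symm).resolve_left hp.ne
  exact h.not_adj_ends (hzv ▸ hp.adj_of_adj u h.adj_left).symm

theorem deleteIncidenceSet (h : IsSuppressible G u p q v)
    (hw : w ∉ ({u, p, q, v} : Set V)) : IsSuppressible (G.deleteIncidenceSet w) u p q v := by
  obtain ⟨hwu, hwp, hwq, hwv⟩ : w ≠ u ∧ w ≠ p ∧ w ≠ q ∧ w ≠ v := by simpa using hw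
  constructor
  · intro y
    rw [deleteIncidenceSet_adj, h.adj_left_iff]
    grind
  · intro y
    rw [deleteIncidenceSet_adj, h.adj_right_iff]
    grind
  exacts [h.left_ne, h.right_ne, h.ends_ne, fun huv => h.not_adj_ends
    (deleteIncidenceSet_adj.1 huv).1]

theorem suppress_adj_iff_of_notMem {y : V} (h : IsSuppressible G u p q v)
    (hw : w ∉ ({u, p, q, v} : Set V)) : (suppress G u p q v).Adj w y ↔ G.Adj w y := by
  have := G.adj_comm w y
  have := h.adj_left_iff w
  have := h.adj_right_iff w
  simp only [Set.mem_insert_iff, Set.mem_singleton_iff] at hw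
  rw [suppress_adj]
  grind

theorem isFoldable_suppress [DecidableEq V] (h : IsSuppressible G u p q v)
    (hfold : IsFoldable G w z) (hw : w ∉ ({u, p, q, v} : Set V)) :
    IsFoldable (suppress G u p q v) w (contractPath u p q v z) := by
  obtain ⟨hwu, hwp, hwq, hwv⟩ : w ≠ u ∧ w ≠ p ∧ w ≠ q ∧ w ≠ v := by simpa using hw
  refine ⟨?_, ?_, (h.encard_neighborSet_suppress_le w).trans hfold.encard_le_two, ?_⟩
  · have := hfold.ne
    rw [contractPath_apply]
    grind
  · obtain ⟨y, hy⟩ := hfold.mem_support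
    exact ⟨y, (h.suppress_adj_iff_of_notMem hw).2 hy⟩
  · intro y hy
    rw [h.suppress_adj_iff_of_notMem hw] at hy
    have hfix : contractPath u p q v y = y := by
      have := h.adj_left_iff w
      have := h.adj_right_iff w
      have := hy.symm
      rw [contractPath_apply]
      grind
    simpa only [hfix] using h.adj_contractPath (hfold.adj_of_adj y hy)

theorem adj_end_iff_of_isFoldable (h : IsSuppressible G u p q v) (hfold : IsFoldable G u z)
    (y : V) : G.Adj u y ↔ y = p := by
  have hzq : z = q :=
    ((h.adj_left_iff z).1 (hfold.adj_of_adj p h.adj_left.symm).symm).resolve_left hfold.ne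
  refine ⟨fun hy => ?_, fun hy => hy ▸ h.adj_left.symm⟩
  refine ((h.adj_right_iff y).1 (hzq ▸ hfold.adj_of_adj y hy)).resolve_right ?_
  rintro rfl
  exact h.not_adj_ends hy

theorem isFoldable_deleteIncidenceSet_end (h : IsSuppressible G u p q v) :
    IsFoldable (G.deleteIncidenceSet u) p v := by
  have hadj (y : V) : (G.deleteIncidenceSet u).Adj p y ↔ y = q := by
    have := h.adj_left.ne
    have := h.left_ne
    rw [deleteIncidenceSet_adj, h.adj_left_iff]
    grind
  refine ⟨h.right_ne, ⟨q, (hadj q).2 rfl⟩,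
    encard_le_two_of_subset_pair (a := q) (b := q) fun y hy => .inl ((hadj y).1 hy), fun y hy => ?_⟩
  obtain rfl := (hadj y).1 hy
  exact deleteIncidenceSet_adj.2 ⟨h.adj_right.symm, h.ends_ne.symm, h.left_ne.symm⟩

theorem lowDegreeRenaming_of_pendant_end (h : IsSuppressible G u p q v)
    (hu : ∀ y, G.Adj u y ↔ y = p) :
    LowDegreeRenaming ((G.deleteIncidenceSet u).deleteIncidenceSet p) (suppress G u p q v) := by
  have hadj (y : V) :
      ((G.deleteIncidenceSet u).deleteIncidenceSet p).Adj q y ↔ y = v := by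
    have := h.right_ne
    have := h.ends_ne
    have := h.left_ne
    have := h.adj_mid.ne
    simp only [deleteIncidenceSet_adj, h.adj_right_iff]
    grind
  refine .of_rename (a := q) (b := u)
    (deleteIncidenceSet_comm G u p ▸ notMem_support_deleteIncidenceSet _ u)
    h.right_notMem_support_suppress
    (encard_le_two_of_subset_pair (a := v) (b := v) fun y hy => .inl ((hadj y).1 hy)) ?_ ?_
  · intro y
    have := h.ends_ne
    rw [hadj, suppress_adj, hu]
    grind
  · intro x y _ _ _ _
    simp only [suppress_adj, deleteIncidenceSet_adj]
    grind

theorem joinable_of_isFoldable_end (h : IsSuppressible G u p q v) (hfold : IsFoldable G u z) :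
    Joinable (G.deleteIncidenceSet u) (suppress G u p q v) :=
  ⟨_, _, .single (.unfold h.isFoldable_deleteIncidenceSet_end rfl),
    h.lowDegreeRenaming_of_pendant_end (h.adj_end_iff_of_isFoldable hfold), .refl⟩

theorem joinable_of_isFoldable (h : IsSuppressible G u p q v) (hfold : IsFoldable G w z) :
    Joinable (G.deleteIncidenceSet w) (suppress G u p q v) := by
  classical
  by_cases hw : w ∈ ({u, p, q, v} : Set V)
  · rcases hw with rfl | rfl | rfl | rfl
    · exact h.joinable_of_isFoldable_end hfold
    · exact (h.not_isFoldable_left hfold).elim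
    · exact (h.reverse.not_isFoldable_left hfold).elim
    · exact suppress_reverse (G := G) ▸ h.reverse.joinable_of_isFoldable_end hfold
  · exact Expansion.joinable (.subdivide (h.deleteIncidenceSet hw) rfl)
      (.unfold (h.isFoldable_suppress hfold hw) (deleteIncidenceSet_suppress hw).symm)

theorem suppress_eq_of_same_inner (h : IsSuppressible G u p q v)
    (h' : IsSuppressible G u' p q v') : suppress G u p q v = suppress G u' p q v' := by
  obtain rfl : u' = u := ((h.adj_left_iff u').1 h'.adj_left).resolve_right h'.left_ne
  obtain rfl : v' = v := ((h.adj_right_iff v').1 h'.adj_right).resolve_left h'.right_ne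
  rfl

theorem lowDegreeRenaming_of_shifted (h : IsSuppressible G u p q v)
    (h' : IsSuppressible G p q v v') :
    LowDegreeRenaming (suppress G u p q v) (suppress G p q v v') := by
  have hv (y : V) : (suppress G u p q v).Adj v y ↔ y = u ∨ y = v' := by
    have := h.adj_right.ne
    have := h.right_ne
    have := h.ends_ne
    have := h'.ends_ne
    have := h'.right_ne
    rw [suppress_adj, h'.adj_right_iff]
    grind
  have hp (y : V) : (suppress G p q v v').Adj p y ↔ y = u ∨ y = v' := by
    have := h.adj_mid.ne
    have := h.right_ne
    have := h.ends_ne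
    have := h.left_ne
    have := h'.ends_ne
    rw [suppress_adj, h.adj_left_iff]
    grind
  refine .of_rename (a := v) (b := p) h.left_notMem_support_suppress
    h'.right_notMem_support_suppress (encard_le_two_of_subset_pair fun y hy => (hv y).1 hy)
    (fun y => (hp y).trans (hv y).symm) ?_
  intro x y _ _ _ _
  simp only [suppress_adj]
  grind

theorem lowDegreeRenaming_of_right_eq_left (h : IsSuppressible G u p q v)
    (h' : IsSuppressible G u' q q' v') :
    LowDegreeRenaming (suppress G u p q v) (suppress G u' q q' v') := by
  rcases (h.adj_right_iff q').1 h'.adj_mid with rfl | rfl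
  · rw [← suppress_reverse, h.reverse.suppress_eq_of_same_inner h']
    exact .refl _
  · obtain rfl : p = u' := ((h'.adj_left_iff p).1 h.adj_mid.symm).resolve_right h.right_ne.symm
    exact h.lowDegreeRenaming_of_shifted h'

theorem shift (h : IsSuppressible G u p q v) (h' : IsSuppressible G q v q' v') :
    IsSuppressible G p q v q' where
  adj_left_iff := h.adj_right_iff
  adj_right_iff := h'.adj_left_iff
  left_ne := h.right_ne.symm
  right_ne := h'.left_ne.symm
  ends_ne := by
    rintro rfl
    have := (h.adj_left_iff v).1 h'.adj_mid.symm
    have := h.ends_ne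
    have := h.adj_right.ne
    grind
  not_adj_ends hpq' := by
    rcases (h.adj_left_iff q').1 hpq' with rfl | rfl
    · exact h.not_adj_ends h'.adj_mid.symm
    · exact h'.left_ne rfl

theorem lowDegreeRenaming_of_end_eq_left (h : IsSuppressible G u p q v)
    (h' : IsSuppressible G u' v q' v') :
    LowDegreeRenaming (suppress G u p q v) (suppress G u' v q' v') := by
  rcases (h'.adj_left_iff q).1 h.adj_right.symm with rfl | rfl
  · have hmid := h.shift h'
    exact (h.lowDegreeRenaming_of_shifted hmid).trans (hmid.lowDegreeRenaming_of_shifted h')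
  · rw [← suppress_reverse (u := u')]
    exact h.lowDegreeRenaming_of_right_eq_left h'.reverse

theorem lowDegreeRenaming_of_left_mem (h : IsSuppressible G u p q v)
    (h' : IsSuppressible G u' p' q' v') (hp' : p' ∈ ({u, p, q, v} : Set V)) :
    LowDegreeRenaming (suppress G u p q v) (suppress G u' p' q' v') := by
  rcases hp' with rfl | rfl | rfl | rfl
  · exact suppress_reverse (G := G) ▸ h.reverse.lowDegreeRenaming_of_end_eq_left h'
  · exact suppress_reverse (G := G) ▸ h.reverse.lowDegreeRenaming_of_right_eq_left h'
  · exact h.lowDegreeRenaming_of_right_eq_left h'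
  · exact h.lowDegreeRenaming_of_end_eq_left h'

theorem isSuppressible_suppress (h : IsSuppressible G u p q v) (h' : IsSuppressible G u' p' q' v')
    (hp' : p' ∉ ({u, p, q, v} : Set V)) (hq' : q' ∉ ({u, p, q, v} : Set V))
    (hends : s(u, v) ≠ s(u', v')) : IsSuppressible (suppress G u p q v) u' p' q' v' where
  adj_left_iff y := (h.suppress_adj_iff_of_notMem hp').trans (h'.adj_left_iff y)
  adj_right_iff y := (h.suppress_adj_iff_of_notMem hq').trans (h'.adj_right_iff y)
  left_ne := h'.left_ne
  right_ne := h'.right_ne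
  ends_ne := h'.ends_ne
  not_adj_ends huv := by
    rw [suppress_adj] at huv
    rw [ne_eq, Sym2.eq_iff] at hends
    rcases huv with ⟨huv, -⟩ | ⟨huv, -⟩
    · exact h'.not_adj_ends huv
    · grind

theorem left_notMem_of_notMem (h : IsSuppressible G u p q v) (h' : IsSuppressible G u' p' q' v')
    (hp' : p' ∉ ({u, p, q, v} : Set V)) (hq' : q' ∉ ({u, p, q, v} : Set V)) :
    p ∉ ({u', p', q', v'} : Set V) := by
  have hpp' : ¬ G.Adj p p' := fun hadj => hp' (by rcases (h.adj_left_iff p').1 hadj <;> simp [*])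
  have hpq' : ¬ G.Adj p q' := fun hadj => hq' (by rcases (h.adj_left_iff q').1 hadj <;> simp [*])
  rintro (rfl | rfl | rfl | rfl)
  exacts [hpp' h'.adj_left.symm, hp' (by simp), hq' (by simp), hpq' h'.adj_right.symm]

theorem right_notMem_of_notMem (h : IsSuppressible G u p q v)
    (h' : IsSuppressible G u' p' q' v') (hp' : p' ∉ ({u, p, q, v} : Set V))
    (hq' : q' ∉ ({u, p, q, v} : Set V)) : q ∉ ({u', p', q', v'} : Set V) :=
  h.reverse.left_notMem_of_notMem h' (by simp_all) (by simp_all)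

theorem suppress_comm (h : IsSuppressible G u p q v) (h' : IsSuppressible G u' p' q' v')
    (hp' : p' ∉ ({u, p, q, v} : Set V)) (hq' : q' ∉ ({u, p, q, v} : Set V)) :
    suppress (suppress G u p q v) u' p' q' v' =
      suppress (suppress G u' p' q' v') u p q v := by
  have hp := h.left_notMem_of_notMem h' hp' hq'
  have hq := h.right_notMem_of_notMem h' hp' hq'
  simp only [Set.mem_insert_iff, Set.mem_singleton_iff] at hp hq hp' hq'
  ext x y
  simp only [suppress_adj]
  grind

theorem isFoldable_suppress_of_parallel (h : IsSuppressible G u p q v)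
    (h' : IsSuppressible G u p' q' v) (hp' : p' ∉ ({u, p, q, v} : Set V))
    (hq' : q' ∉ ({u, p, q, v} : Set V)) : IsFoldable (suppress G u p q v) p' v := by
  have hadj (y : V) : (suppress G u p q v).Adj p' y ↔ y = u ∨ y = q' :=
    (h.suppress_adj_iff_of_notMem hp').trans (h'.adj_left_iff y)
  refine ⟨h'.right_ne, ⟨u, (hadj u).2 (.inl rfl)⟩,
    encard_le_two_of_subset_pair fun y hy => (hadj y).1 hy, fun y hy => ?_⟩
  rcases (hadj y).1 hy with rfl | rfl
  · exact suppress_adj.2 (.inr ⟨.inr ⟨rfl, rfl⟩, h.ends_ne.symm⟩)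
  · exact ((h.suppress_adj_iff_of_notMem hq').2 h'.adj_right).symm

theorem adj_deleteIncidenceSet_suppress_of_parallel (h : IsSuppressible G u p q v)
    (h' : IsSuppressible G u p' q' v) (hq' : q' ∉ ({u, p, q, v} : Set V)) (y : V) :
    ((suppress G u p q v).deleteIncidenceSet p').Adj q' y ↔ y = v := by
  have := h'.right_ne
  have := h'.adj_mid.ne
  rw [deleteIncidenceSet_adj, h.suppress_adj_iff_of_notMem hq', h'.adj_right_iff]
  grind

theorem lowDegreeRenaming_of_parallel (h : IsSuppressible G u p q v)
    (h' : IsSuppressible G u p' q' v)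
    (hp' : p' ∉ ({u, p, q, v} : Set V)) (hq' : q' ∉ ({u, p, q, v} : Set V)) :
    LowDegreeRenaming ((suppress G u p q v).deleteIncidenceSet p')
      ((suppress G u p' q' v).deleteIncidenceSet p) := by
  have hq := h.right_notMem_of_notMem h' hp' hq'
  have hadj := h.adj_deleteIncidenceSet_suppress_of_parallel h' hq'
  have hadj' := h'.adj_deleteIncidenceSet_suppress_of_parallel h hq
  refine .of_rename (a := q') (b := q)
    (fun hmem => h.right_notMem_support_suppress (support_mono (deleteIncidenceSet_le _ _) hmem))
    (fun hmem => h'.right_notMem_support_suppress (support_mono (deleteIncidenceSet_le _ _) hmem))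
    (encard_le_two_of_subset_pair (a := v) (b := v) fun y hy => .inl ((hadj y).1 hy))
    (fun y => (hadj' y).trans (hadj y).symm) ?_
  intro x y _ _ _ _
  simp only [Set.mem_insert_iff, Set.mem_singleton_iff] at hp' hq'
  have := h.adj_left.ne
  have := h.right_ne
  simp only [deleteIncidenceSet_adj, suppress_adj]
  grind

-- After suppressing one of two parallel paths, the other closes up to a 4-cycle, so that its inner
-- vertices become foldable.
theorem joinable_of_parallel (h : IsSuppressible G u p q v) (h' : IsSuppressible G u p' q' v)
    (hp' : p' ∉ ({u, p, q, v} : Set V)) (hq' : q' ∉ ({u, p, q, v} : Set V)) :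
    Joinable (suppress G u p q v) (suppress G u p' q' v) :=
  ⟨_, _, .single (.unfold (h.isFoldable_suppress_of_parallel h' hp' hq') rfl),
    h.lowDegreeRenaming_of_parallel h' hp' hq',
    .single (.unfold (h'.isFoldable_suppress_of_parallel h (h.left_notMem_of_notMem h' hp' hq')
      (h.right_notMem_of_notMem h' hp' hq')) rfl)⟩

theorem joinable (h : IsSuppressible G u p q v) (h' : IsSuppressible G u' p' q' v') :
    Joinable (suppress G u p q v) (suppress G u' p' q' v') := by
  by_cases hp' : p' ∈ ({u, p, q, v} : Set V)
  · exact (h.lowDegreeRenaming_of_left_mem h' hp').joinable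
  by_cases hq' : q' ∈ ({u, p, q, v} : Set V)
  · rw [← suppress_reverse (u := u')]
    exact (h.lowDegreeRenaming_of_left_mem h'.reverse hq').joinable
  by_cases hends : s(u, v) = s(u', v')
  · rcases Sym2.eq_iff.1 hends with ⟨rfl, rfl⟩ | ⟨rfl, rfl⟩
    · exact h.joinable_of_parallel h' hp' hq'
    · rw [← suppress_reverse (u := v)]
      exact h.joinable_of_parallel h'.reverse hq' hp'
  · have hp := h.left_notMem_of_notMem h' hp' hq'
    have hq := h.right_notMem_of_notMem h' hp' hq'
    exact Expansion.joinable (.subdivide (h.isSuppressible_suppress h' hp' hq' hends) rfl)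
      (.subdivide (h'.isSuppressible_suppress h hp hq (Ne.symm hends))
        (h.suppress_comm h' hp' hq'))

end IsSuppressible

theorem Expansion.diamond {G₁ G₂ : SimpleGraph V} (h₁ : Expansion G₁ G) (h₂ : Expansion G₂ G) :
    Joinable G₁ G₂ := by
  rcases h₁ with ⟨h₁, rfl⟩ | ⟨h₁, rfl⟩ <;> rcases h₂ with ⟨h₂, rfl⟩ | ⟨h₂, rfl⟩
  · exact h₁.joinable h₂
  · exact h₂.joinable_of_isFoldable h₁
  · exact (h₁.joinable_of_isFoldable h₂).symm
  · exact h₁.joinable h₂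

end

/-! ### Expansions and the forward operations -/

section

variable {G G' : SimpleGraph ℕ}

theorem OpI.expansion (h : OpI G' G) : Expansion G' G := by
  obtain ⟨v, w, ⟨z, hvz⟩, hw, rfl⟩ := h
  have hw' (y : ℕ) : ¬ G'.Adj w y := fun hy => hw ⟨y, hy⟩
  have hwv : w ≠ v := fun hwv => hw' z (hwv ▸ hvz)
  have hadj (y : ℕ) : (G' ⊔ edge v w).Adj w y ↔ y = v := by
    rw [sup_adj, edge_adj]
    grind
  refine .unfold (w := w) (z := z) ⟨?_, ⟨v, (hadj v).2 rfl⟩, ?_, fun y hy => ?_⟩ ?_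
  · rintro rfl
    exact hw' v hvz.symm
  · exact encard_le_two_of_subset_pair (a := v) (b := v) fun y hy => .inl ((hadj y).1 hy)
  · rw [(hadj y).1 hy]
    exact .inl hvz.symm
  · ext x y
    have := G'.adj_comm x y
    rw [deleteIncidenceSet_adj, sup_adj, edge_adj]
    grind

theorem OpII.expansion (h : OpII G' G) : Expansion G' G := by
  obtain ⟨u, v, p, q, huv, hp, hq, hpq, rfl⟩ := h
  have hp' (y : ℕ) : ¬ G'.Adj p y := fun hy => hp ⟨y, hy⟩
  have hq' (y : ℕ) : ¬ G'.Adj q y := fun hy => hq ⟨y, hy⟩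
  have hcomm := G'.adj_comm
  have huv' := huv.ne
  refine .subdivide (u := u) (p := p) (q := q) (v := v) ⟨fun y => ?_, fun y => ?_, ?_, ?_, huv', ?_⟩
    ?_
  · simp only [sup_adj, edge_adj, deleteEdges_adj, Set.mem_singleton_iff, Sym2.eq_iff]
    grind
  · simp only [sup_adj, edge_adj, deleteEdges_adj, Set.mem_singleton_iff, Sym2.eq_iff]
    grind
  · exact fun huq => hq' v (huq ▸ huv)
  · exact fun hvp => hp' u (hvp ▸ huv.symm)
  · simp only [sup_adj, edge_adj, deleteEdges_adj, Set.mem_singleton_iff]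
    grind
  · ext x y
    simp only [suppress_adj, sup_adj, edge_adj, deleteEdges_adj, Set.mem_singleton_iff, Sym2.eq_iff]
    grind

theorem OpIII.expansion (h : OpIII G' G) : Expansion G' G := by
  obtain ⟨x, y, z, w, -, -, hxz, hyz, hw, rfl⟩ := h
  have hw' (t : ℕ) : ¬ G'.Adj w t := fun ht => hw ⟨t, ht⟩
  have hwx : w ≠ x := fun hwx => hw' z (hwx ▸ hxz)
  have hwy : w ≠ y := fun hwy => hw' z (hwy ▸ hyz)
  have hadj (t : ℕ) : (G' ⊔ edge x w ⊔ edge w y).Adj w t ↔ t = x ∨ t = y := by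
    simp only [sup_adj, edge_adj]
    grind
  refine .unfold (w := w) (z := z) ⟨?_, ⟨x, (hadj x).2 (.inl rfl)⟩,
    encard_le_two_of_subset_pair fun t ht => (hadj t).1 ht, fun t ht => ?_⟩ ?_
  · rintro rfl
    exact hw' x hxz.symm
  · rcases (hadj t).1 ht with rfl | rfl
    exacts [.inl (.inl hxz.symm), .inl (.inl hyz.symm)]
  · ext s t
    have := G'.adj_comm s t
    simp only [deleteIncidenceSet_adj, sup_adj, edge_adj]
    grind

theorem OpFwd.expansion (h : OpFwd G' G) : Expansion G' G := by
  rcases h with h | h | h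
  exacts [h.expansion, h.expansion, h.expansion]

theorem IsFoldable.opFwd {w z : ℕ} (h : IsFoldable G w z) (hfree : G.CliqueFree 3) :
    OpFwd (G.deleteIncidenceSet w) G := by
  obtain ⟨a, b, hN⟩ := exists_eq_pair_of_encard_le_two h.mem_support h.encard_le_two
  have hadj (y : ℕ) : G.Adj w y ↔ y = a ∨ y = b := Set.ext_iff.1 hN y
  have ha : G.Adj w a := (hadj a).2 (.inl rfl)
  have hb : G.Adj w b := (hadj b).2 (.inr rfl)
  have hw := notMem_support_deleteIncidenceSet G w
  have haz : (G.deleteIncidenceSet w).Adj a z :=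
    deleteIncidenceSet_adj.2 ⟨(h.adj_of_adj a ha).symm, ha.ne', h.ne⟩
  have hbz : (G.deleteIncidenceSet w).Adj b z :=
    deleteIncidenceSet_adj.2 ⟨(h.adj_of_adj b hb).symm, hb.ne', h.ne⟩
  have hG : G = G.deleteIncidenceSet w ⊔ edge a w ⊔ edge w b := by
    ext x y
    have := G.adj_comm x w
    have := ha.ne
    have := hb.ne
    simp only [sup_adj, edge_adj, deleteIncidenceSet_adj]
    grind
  by_cases hab : a = b
  · subst hab
    exact .inl ⟨a, w, ⟨z, haz⟩, hw, by rwa [edge_comm w a, sup_assoc, sup_idem] at hG⟩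
  · have hnadj : ¬ (G.deleteIncidenceSet w).Adj a b := fun h =>
      not_adj_of_cliqueFree_three hfree ha hb (deleteIncidenceSet_adj.1 h).1
    exact .inr (.inr ⟨a, b, z, w, hab, hnadj, haz, hbz, hw, hG⟩)

theorem IsSuppressible.opII {u p q v : ℕ} (h : IsSuppressible G u p q v) :
    OpII (suppress G u p q v) G := by
  refine ⟨u, v, p, q, suppress_adj.2 (.inr ⟨.inl ⟨rfl, rfl⟩, h.ends_ne⟩),
    h.left_notMem_support_suppress, h.right_notMem_support_suppress, h.adj_mid.ne, ?_⟩
  ext x y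
  have := h.adj_left_iff x
  have := h.adj_left_iff y
  have := h.adj_right_iff x
  have := h.adj_right_iff y
  have := h.adj_left.ne
  have := h.adj_mid.ne
  have := h.adj_right.ne
  have := h.not_adj_ends
  have := G.adj_comm x y
  simp only [suppress_adj, sup_adj, edge_adj, deleteEdges_adj, Set.mem_singleton_iff, Sym2.eq_iff]
  grind

theorem Expansion.opFwd (h : Expansion G' G) (hfree : G.CliqueFree 3) : OpFwd G' G := by
  rcases h with ⟨h, rfl⟩ | ⟨h, rfl⟩
  · exact h.opFwd hfree
  · exact .inr (.inl h.opII)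

end

/-! ### Eliminating inverse operations -/

namespace SeqN

variable {H G K G' : SimpleGraph ℕ} {n : ℕ}

theorem encard_neighborSet_le (h : SeqN Expansion n H G) (x : ℕ) :
    (H.neighborSet x).encard ≤ (G.neighborSet x).encard := by
  induction h with
  | refl => exact le_rfl
  | tail _ hstep ih => exact ih.trans (hstep.encard_neighborSet_le x)

theorem comap (h : SeqN Expansion n H G) (σ : Equiv.Perm ℕ) :
    SeqN Expansion n (H.comap σ) (G.comap σ) := by
  induction h with
  | refl => exact .refl _
  | tail _ hstep ih => exact ih.tail (hstep.comap σ)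

theorem cliqueFree {k : ℕ} (h : SeqN Expansion n H G) (hH : H.CliqueFree k) : G.CliqueFree k := by
  induction h with
  | refl => exact hH
  | tail _ hstep ih => exact hstep.cliqueFree (ih hH)

theorem opFwd (h : SeqN Expansion n H G) (hH : H.CliqueFree 3) : SeqN OpFwd n H G := by
  induction h with
  | refl => exact .refl _
  | tail hseq hstep ih => exact (ih hH).tail (hstep.opFwd (hstep.cliqueFree (hseq.cliqueFree hH)))

theorem of_lowDegreeRenaming (hdeg : ∀ v ∈ H.support, 3 ≤ (H.neighborSet v).encard)
    (h : SeqN Expansion n H G) (hK : LowDegreeRenaming G K) : SeqN Expansion n H K := by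
  obtain ⟨σ, hσ, rfl⟩ := hK
  have hfix : ∀ x ∈ H.support, σ x = x := fun x hx => by
    by_contra hmoved
    have hle : (3 : ℕ∞) ≤ 2 :=
      (hdeg x hx).trans ((h.encard_neighborSet_le x).trans (hσ x hmoved))
    exact absurd hle (by decide)
  exact comap_eq_self_of_fixes_support hfix ▸ h.comap σ

theorem exists_le_of_expansion (hdeg : ∀ v ∈ H.support, 3 ≤ (H.neighborSet v).encard)
    (h : SeqN Expansion n H G) (hG' : Expansion G' G) : ∃ m ≤ n, SeqN Expansion m H G' := by
  induction h generalizing G' with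
  | refl =>
    obtain ⟨x, hx, hle⟩ := hG'.exists_encard_neighborSet_le_two
    exact absurd ((hdeg x hx).trans hle) (by decide)
  | @tail n H G₁ G hseq hstep ih =>
    obtain ⟨K₁, K₂, hK₁, hK, hK₂⟩ := hstep.diamond hG'
    obtain ⟨m, hmn, hm⟩ : ∃ m ≤ n, SeqN Expansion m H K₁ := by
      rcases hK₁ with _ | hK₁
      exacts [⟨n, le_rfl, hseq⟩, ih hdeg hK₁]
    have hseq₂ : SeqN Expansion m H K₂ := hm.of_lowDegreeRenaming hdeg hK
    rcases hK₂ with _ | hK₂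
    exacts [⟨m, by lia, hseq₂⟩, ⟨m + 1, by lia, hseq₂.tail hK₂⟩]

theorem exists_expansion_of_opAny (hdeg : ∀ v ∈ H.support, 3 ≤ (H.neighborSet v).encard)
    (h : SeqN OpAny n H G) : ∃ m ≤ n, SeqN Expansion m H G := by
  induction h with
  | refl => exact ⟨0, le_rfl, .refl _⟩
  | tail _ hstep ih =>
    obtain ⟨m, hmn, hm⟩ := ih hdeg
    rcases hstep with hfwd | hbwd
    · exact ⟨m + 1, by lia, hm.tail hfwd.expansion⟩
    · obtain ⟨k, hkm, hk⟩ := hm.exists_le_of_expansion hdeg hbwd.expansion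
      exact ⟨k, by lia, hk⟩

end SeqN

theorem stmt_1_general (H H' : SimpleGraph ℕ) (t : ℕ) (hfree : H.CliqueFree 3)
    (hdeg : ∀ v ∈ H.support, 3 ≤ (H.neighborSet v).encard) (h : SeqN OpAny t H H') :
    ∃ s ≤ t, SeqN OpFwd s H H' := by
  obtain ⟨s, hst, hs⟩ := h.exists_expansion_of_opAny hdeg
  exact ⟨s, hst, hs.opFwd hfree⟩

/-- If `H` is bipartite with finitely many edges and every support vertex of `H`
has degree at least `3`, and `H'` is obtained from `H` by exactly `t` operations
among (I), (II), (III), (I'), (II'), (III'), then `H'` is obtained from `H` by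
at most `t` operations among (I), (II), (III). -/
theorem stmt_1 (H H' : SimpleGraph ℕ) (t : ℕ) (hfin : H.edgeSet.Finite)
    (hbip : H.Colorable 2)
    (hdeg : ∀ v ∈ H.support, 3 ≤ (H.neighborSet v).ncard)
    (h : SeqN OpAny t H H') :
    ∃ s ≤ t, SeqN OpFwd s H H' := by
  exact stmt_1_general H H' t (hbip.cliqueFree (by norm_num))
    (fun v hv => (by exact_mod_cast hdeg v hv : (3 : ℕ∞) ≤ (H.neighborSet v).ncard).trans
      (Set.ncard_le_encard _)) h
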